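/- Let d,k ≥ 1 and n ≥ 0. Every equivalence class of the relation on T_n given by t ~ t' iff ld(t) ~_k^d ld(t') contains exactly one (d;k)-minimal element. -/

import Mathlib

/-- Full binary trees (every internal node has exactly two children). -/
inductive BTree : Type
  | leaf : BTree
  | node : BTree → BTree → BTree
deriving DecidableEq

namespace BTree

/-- Number of leaves of a full binary tree. -/
def numLeaves : BTree → ℕ
  | leaf => 1
  | node l r => l.numLeaves + r.numLeaves

/-- The list of pairs (left depth, right depth) of the leaves, in preorder. -/
def leafDepths : BTree → List (ℕ × ℕ)
  | leaf => [(0, 0)]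
  | node l r =>
      (l.leafDepths.map fun p => (p.1 + 1, p.2)) ++ (r.leafDepths.map fun p => (p.1, p.2 + 1))

/-- The left depth sequence `ld(t)` of the leaves of `t`, in preorder. -/
def ld (t : BTree) : List ℕ := t.leafDepths.map Prod.fst

/-- The right depth sequence `rd(t)` of the leaves of `t`, in preorder. -/
def rd (t : BTree) : List ℕ := t.leafDepths.map Prod.snd

end BTree

/-- `b ~^d c` : the sequences have equal length and agree at every position where
either entry is `< d`. -/
def DepthEq (d : ℕ) : List ℕ → List ℕ → Prop :=
  List.Forall₂ (fun a b => min a b < d → a = b)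

/-- `b ~_k c` : entrywise congruence mod `k` (and equal length). -/
def ModListEq (k : ℕ) : List ℕ → List ℕ → Prop :=
  List.Forall₂ (fun a b => a % k = b % k)

/-- The relation `t ~ t'` iff `ld(t) ~^d ld(t')` and `rd(t) ~^e rd(t')`. -/
def DeRel (d e : ℕ) (t t' : BTree) : Prop :=
  DepthEq d t.ld t'.ld ∧ DepthEq e t.rd t'.rd

/-- The relation `t ~ t'` iff `ld(t) ~_k^d ld(t')` (i.e. `ld(t) ~_k ld(t')` and
`ld(t) ~^d ld(t')`). -/
def DkRel (d k : ℕ) (t t' : BTree) : Prop :=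
  ModListEq k t.ld t'.ld ∧ DepthEq d t.ld t'.ld

/-- `T_n`: full binary trees with `n+1` leaves. -/
def Tn (n : ℕ) : Type := {t : BTree // t.numLeaves = n + 1}

/-- `C^{d,e}_n`: the number of equivalence classes of the relation `DeRel d e` on `T_n`. -/
noncomputable def Cde (d e n : ℕ) : ℕ :=
  Nat.card (Quot (fun t t' : Tn n => DeRel d e t.1 t'.1))

/-- `C^d_{k,n}`: the number of equivalence classes of `ld(t) ~_k^d ld(t')` on `T_n`. -/
noncomputable def Cdk (d k n : ℕ) : ℕ :=
  Nat.card (Quot (fun t t' : Tn n => DkRel d k t.1 t'.1))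

/-- Directions to a left or right child. -/
inductive Dir : Type
  | L : Dir
  | R : Dir
deriving DecidableEq

/-- The maximal subtree rooted at the node at position `p` (if such a node exists). -/
def subtreeAt : BTree → List Dir → Option BTree
  | t, [] => some t
  | BTree.leaf, _ :: _ => none
  | BTree.node l _, Dir.L :: p => subtreeAt l p
  | BTree.node _ r, Dir.R :: p => subtreeAt r p

/-- Replace the maximal subtree rooted at position `p` by `s` (if the position exists). -/
def replaceAt : BTree → List Dir → BTree → Option BTree
  | _, [], s => some s
  | BTree.leaf, _ :: _, _ => none
  | BTree.node l r, Dir.L :: p, s => (replaceAt l p s).map fun l' => BTree.node l' r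
  | BTree.node l r, Dir.R :: p, s => (replaceAt r p s).map fun r' => BTree.node l r'

/-- `leftAssoc t₀ [t₁,…,t_m] = t₀ ∧ t₁ ∧ ⋯ ∧ t_m` with `∧` performed left to right. -/
def leftAssoc : BTree → List BTree → BTree := List.foldl BTree.node

/-- `t'` is obtained from `t` by a right `k`-rotation at the node at position `p`:
the maximal subtree `t₀ ∧ t₁ ∧ ⋯ ∧ t_{k+1}` rooted there (with `∧` performed left to
right) is replaced by `t₀ ∧ (t₁ ∧ ⋯ ∧ t_{k+1})`.  The left depth of that node is
`p.count Dir.L`. -/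
def IsRightKRot (k : ℕ) (p : List Dir) (t t' : BTree) : Prop :=
  ∃ (t₀ t₁ : BTree) (rest : List BTree), rest.length = k ∧
    subtreeAt t p = some (leftAssoc t₀ (t₁ :: rest)) ∧
    replaceAt t p (BTree.node t₀ (leftAssoc t₁ rest)) = some t'

/-- `IsTopOf s u`: `s` is a subtree of `u` rooted at the root of `u`. -/
def IsTopOf : BTree → BTree → Prop
  | BTree.leaf, _ => True
  | BTree.node l r, BTree.node l' r' => IsTopOf l l' ∧ IsTopOf r r'
  | BTree.node _ _, BTree.leaf => False

/-- `t` contains `s` at left depth `δ`: `t` has a subtree equal to `s` rooted at a node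
of left depth `δ`. -/
def ContainsAt (t s : BTree) (δ : ℕ) : Prop :=
  ∃ (p : List Dir) (u : BTree), subtreeAt t p = some u ∧ p.count Dir.L = δ ∧ IsTopOf s u

/-- `t` avoids `s` at left depth `δ`. -/
def AvoidsAt (t s : BTree) (δ : ℕ) : Prop := ¬ ContainsAt t s δ

/-- `comb_k`: the left-to-right `∧`-product of `k+1` single leaves. -/
def comb (k : ℕ) : BTree := leftAssoc BTree.leaf (List.replicate k BTree.leaf)

/-- `comb_k^1 := t₀ ∧ comb_k` with `t₀` a single leaf. -/
def comb1 (k : ℕ) : BTree := BTree.node BTree.leaf (comb k)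

/-- One left `k`-rotation step, at a node of left depth at least `d-1`, from `t` to `t'`. -/
def LeftRotStep (d k : ℕ) (t t' : BTree) : Prop :=
  ∃ p : List Dir, d - 1 ≤ p.count Dir.L ∧ IsRightKRot k p t' t

/-- The `(d;k)`-order: `s ≤ t` iff `s` is obtained from `t` by finitely many left
`k`-rotations at nodes of left depth at least `d-1`. -/
def dkLE (d k : ℕ) (s t : BTree) : Prop := Relation.ReflTransGen (LeftRotStep d k) t s

/-- `t` is `(d;k)`-minimal. -/
def dkMinimal (d k : ℕ) (t : BTree) : Prop := ∀ s, dkLE d k s t → s = t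

/-- `t` is `(d;k)`-maximal. -/
def dkMaximal (d k : ℕ) (t : BTree) : Prop := ∀ s, dkLE d k t s → s = t

namespace Aux11

/-- Left depths shifted by the left depth of the root. -/
def ldAt : ℕ → BTree → List ℕ
  | δ, BTree.leaf => [δ]
  | δ, BTree.node l r => ldAt (δ + 1) l ++ ldAt δ r

/-- Length of the left spine. -/
def spine : BTree → ℕ
  | BTree.leaf => 0
  | BTree.node l _ => spine l + 1

/-- Sum of the sizes of all right subtrees. -/
def meas : BTree → ℕ
  | BTree.leaf => 0
  | BTree.node l r => meas l + meas r + r.numLeaves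

/-- No left rotation is available. -/
def Good (d k : ℕ) : ℕ → BTree → Prop
  | _, BTree.leaf => True
  | δ, BTree.node l r => Good d k (δ + 1) l ∧ Good d k δ r ∧ (d - 1 ≤ δ → spine r < k)

/-- The combined entrywise relation. -/
def R (d k : ℕ) (a b : ℕ) : Prop := a % k = b % k ∧ (min a b < d → a = b)

theorem ldAt_eq (t : BTree) : ∀ δ, ldAt δ t = t.ld.map (· + δ) := by
  induction t with
  | leaf => intro δ; simp [ldAt, BTree.ld, BTree.leafDepths]
  | node l r ihl ihr =>
    intro δ
    simp only [ldAt, ihl, ihr]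
    simp [BTree.ld, BTree.leafDepths, Function.comp_def]
    intros; omega

theorem ld_eq (t : BTree) : t.ld = ldAt 0 t := by
  simp [ldAt_eq]

theorem length_ldAt (t : BTree) : ∀ δ, (ldAt δ t).length = t.numLeaves := by
  induction t with
  | leaf => intro δ; simp [ldAt, BTree.numLeaves]
  | node l r ihl ihr => intro δ; simp [ldAt, BTree.numLeaves, ihl, ihr]

theorem numLeaves_pos (t : BTree) : 0 < t.numLeaves := by
  induction t with
  | leaf => simp [BTree.numLeaves]
  | node l r ihl ihr => simp [BTree.numLeaves, ihl]

theorem ldAt_head (t : BTree) : ∀ δ, ∃ w, ldAt δ t = (δ + spine t) :: w := by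
  induction t with
  | leaf => intro δ; exact ⟨[], by simp [ldAt, spine]⟩
  | node l r ihl ihr =>
    intro δ
    obtain ⟨w, hw⟩ := ihl (δ + 1)
    refine ⟨w ++ ldAt δ r, ?_⟩
    simp only [ldAt, spine, hw, List.cons_append]
    congr 1
    omega

theorem ldAt_last (t : BTree) : ∀ δ, ∃ w, ldAt δ t = w ++ [δ] := by
  induction t with
  | leaf => intro δ; exact ⟨[], by simp [ldAt]⟩
  | node l r ihl ihr =>
    intro δ
    obtain ⟨w, hw⟩ := ihr δ
    exact ⟨ldAt (δ + 1) l ++ w, by simp [ldAt, hw]⟩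

theorem ldAt_inj (t : BTree) : ∀ (δ : ℕ) (t' : BTree) (u u' : List ℕ),
    ldAt δ t ++ u = ldAt δ t' ++ u' → t = t' ∧ u = u' := by
  induction t with
  | leaf =>
    intro δ t' u u' h
    cases t' with
    | leaf => simpa [ldAt] using h
    | node l r =>
      obtain ⟨w, hw⟩ := ldAt_head (BTree.node l r) δ
      rw [hw] at h
      simp [ldAt, spine] at h
  | node l r ihl ihr =>
    intro δ t' u u' h
    cases t' with
    | leaf =>
      obtain ⟨w, hw⟩ := ldAt_head (BTree.node l r) δ
      rw [hw] at h
      simp [ldAt, spine] at h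
    | node l' r' =>
      simp only [ldAt, List.append_assoc] at h
      obtain ⟨h1, h2⟩ := ihl _ _ _ _ h
      obtain ⟨h3, h4⟩ := ihr _ _ _ _ h2
      exact ⟨by rw [h1, h3], h4⟩

theorem good_chain (d k : ℕ) (t : BTree) : ∀ δ, Good d k δ t →
    List.IsChain (fun x y => x ≤ y + 1 ∧ (d ≤ x → y + 1 < x + k)) (ldAt δ t) := by
  induction t with
  | leaf => intro δ _; simp [ldAt]
  | node l r ihl ihr =>
    intro δ h
    obtain ⟨h1, h2, h3⟩ := h
    simp only [ldAt]
    rw [List.isChain_append]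
    refine ⟨ihl _ h1, ihr _ h2, ?_⟩
    intro x hx y hy
    obtain ⟨w, hw⟩ := ldAt_last l (δ + 1)
    obtain ⟨w', hw'⟩ := ldAt_head r δ
    rw [hw] at hx
    rw [hw'] at hy
    simp at hx hy
    subst hx hy
    refine ⟨by omega, fun hd => ?_⟩
    have := h3 (by omega)
    omega

theorem back_unique (d k : ℕ) : ∀ (b c : List ℕ), List.Forall₂ (R d k) b c →
    List.IsChain (fun x y => x ≤ y + 1 ∧ (d ≤ x → y + 1 < x + k)) b →
    List.IsChain (fun x y => x ≤ y + 1 ∧ (d ≤ x → y + 1 < x + k)) c →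
    b.getLast? = c.getLast? → b = c := by
  intro b c h
  induction h with
  | nil => intros; rfl
  | @cons x y bs cs hxy hr ih =>
    intro hb hc hl
    cases hr with
    | nil => simpa using hl
    | @cons z z' bs' cs' hz hr' =>
      have heq := ih hb.tail hc.tail (by simpa using hl)
      rw [heq] at hb ⊢
      simp only [List.isChain_cons_cons] at hb hc
      congr 1
      by_cases hm : min x y < d
      · exact hxy.2 hm
      · have h1 := hb.1
        have h2 := hc.1
        have h3 := h1.2 (by omega)
        have h4 := h2.2 (by omega)
        have hmod : Nat.ModEq k x y := hxy.1
        exact Nat.ModEq.eq_of_abs_lt hmod (by rw [abs_lt]; omega)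

theorem leftAssoc_ld (δ : ℕ) (rest : List BTree) : ∃ W, ∀ t₀,
    ldAt δ (leftAssoc t₀ rest) = ldAt (δ + rest.length) t₀ ++ W := by
  induction rest with
  | nil => exact ⟨[], by simp [leftAssoc]⟩
  | cons a l ih =>
    obtain ⟨W, hW⟩ := ih
    refine ⟨ldAt (δ + l.length) a ++ W, fun t₀ => ?_⟩
    have : leftAssoc t₀ (a :: l) = leftAssoc (BTree.node t₀ a) l := rfl
    rw [this, hW]
    simp [ldAt, add_assoc]

theorem leftAssoc_meas (rest : List BTree) : ∃ S S', rest.length ≤ S ∧ ∀ t₀,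
    (leftAssoc t₀ rest).numLeaves = t₀.numLeaves + S ∧
    meas (leftAssoc t₀ rest) = meas t₀ + S' := by
  induction rest with
  | nil => exact ⟨0, 0, by simp [leftAssoc]⟩
  | cons a l ih =>
    obtain ⟨S, S', hl, hS⟩ := ih
    refine ⟨a.numLeaves + S, meas a + a.numLeaves + S', ?_, fun t₀ => ?_⟩
    · have := numLeaves_pos a
      simp; omega
    · have h := hS (BTree.node t₀ a)
      have : leftAssoc t₀ (a :: l) = leftAssoc (BTree.node t₀ a) l := rfl
      rw [this, h.1, h.2]
      simp only [BTree.numLeaves, meas]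
      omega

theorem spine_decomp : ∀ (k : ℕ) (r : BTree), k ≤ spine r →
    ∃ (t₁ : BTree) (rest : List BTree), rest.length = k ∧ r = leftAssoc t₁ rest := by
  intro k
  induction k with
  | zero => intro r _; exact ⟨r, [], rfl, rfl⟩
  | succ k ih =>
    intro r h
    cases r with
    | leaf => simp [spine] at h
    | node a b =>
      obtain ⟨t₁, rest, h1, h2⟩ := ih a (by simpa [spine] using h)
      exact ⟨t₁, rest ++ [b], by simp [h1], by rw [h2]; simp [leftAssoc]⟩

theorem R_refl (d k a : ℕ) : R d k a a := ⟨rfl, fun _ => rfl⟩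

theorem forall_refl (d k : ℕ) (l : List ℕ) : List.Forall₂ (R d k) l l := by
  induction l with
  | nil => exact .nil
  | cons a l ih => exact .cons (R_refl d k a) ih

theorem forall_symm (d k : ℕ) {a b : List ℕ} (h : List.Forall₂ (R d k) a b) :
    List.Forall₂ (R d k) b a := by
  induction h with
  | nil => exact .nil
  | cons h _ ih => exact .cons ⟨h.1.symm, fun hm => (h.2 (by omega)).symm⟩ ih

theorem forall_trans (d k : ℕ) {a b : List ℕ} (h : List.Forall₂ (R d k) a b) :
    ∀ {c}, List.Forall₂ (R d k) b c → List.Forall₂ (R d k) a c := by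
  induction h with
  | nil => intro c h; exact h
  | @cons x y _ _ h _ ih =>
    intro c h'
    cases h' with
    | @cons _ z _ _ h1 h2 =>
      refine .cons ⟨h.1.trans h1.1, fun hm => ?_⟩ (ih h2)
      have := h.2
      have := h1.2
      omega

theorem forall_append (d k : ℕ) {a b a' b' : List ℕ} (h : List.Forall₂ (R d k) a b)
    (h' : List.Forall₂ (R d k) a' b') : List.Forall₂ (R d k) (a ++ a') (b ++ b') := by
  induction h with
  | nil => exact h'
  | cons h _ ih => exact .cons h ih

theorem shift_rel (d k : ℕ) (t : BTree) : ∀ δ, d ≤ δ →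
    List.Forall₂ (R d k) (ldAt (δ + k) t) (ldAt δ t) := by
  induction t with
  | leaf =>
    intro δ h
    exact .cons ⟨by simp, fun hm => by omega⟩ .nil
  | node l r ihl ihr =>
    intro δ h
    have := ihl (δ + 1) (by omega)
    rw [show δ + 1 + k = δ + k + 1 by omega] at this
    exact forall_append d k this (ihr δ h)

theorem step_lemma (d k : ℕ) (hd : 1 ≤ d) (hk : 1 ≤ k) (p : List Dir) :
    ∀ (δ : ℕ) (t' t : BTree), d - 1 ≤ δ + p.count Dir.L → IsRightKRot k p t' t →
    List.Forall₂ (R d k) (ldAt δ t') (ldAt δ t) ∧ meas t' < meas t ∧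
      t'.numLeaves = t.numLeaves := by
  induction p with
  | nil =>
    intro δ t' t h hr
    obtain ⟨t₀, t₁, rest, hlen, hs, hrep⟩ := hr
    simp [subtreeAt] at hs
    simp [replaceAt] at hrep
    have hs' : t' = leftAssoc (BTree.node t₀ t₁) rest := by rw [hs]; rfl
    obtain ⟨W, hW⟩ := leftAssoc_ld δ rest
    obtain ⟨S, S', hSl, hS⟩ := leftAssoc_meas rest
    subst hs' hrep
    refine ⟨?_, ?_, ?_⟩
    · simp only [ldAt, hW, hlen, List.append_assoc]
      refine forall_append d k ?_ (forall_refl d k _)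
      have := shift_rel d k t₀ (δ + 1) (by simp at h; omega)
      rwa [show δ + 1 + k = δ + k + 1 by omega] at this
    · rw [(hS _).2]
      simp only [meas]
      rw [(hS _).2, (hS _).1]
      omega
    · rw [(hS _).1]
      simp only [BTree.numLeaves]
      rw [(hS _).1]
      omega
  | cons a p ih =>
    intro δ t' t h hr
    obtain ⟨t₀, t₁, rest, hlen, hs, hrep⟩ := hr
    cases t' with
    | leaf => simp [subtreeAt] at hs
    | node l r =>
      cases a with
      | L =>
        simp only [subtreeAt] at hs
        simp only [replaceAt, Option.map_eq_some_iff] at hrep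
        obtain ⟨l', hl', rfl⟩ := hrep
        obtain ⟨h1, h2, h3⟩ := ih (δ + 1) l l' (by simp at h; omega)
          ⟨t₀, t₁, rest, hlen, hs, hl'⟩
        refine ⟨forall_append d k h1 (forall_refl d k _), ?_, ?_⟩
        · simp only [meas]; omega
        · simp only [BTree.numLeaves]; omega
      | R =>
        simp only [subtreeAt] at hs
        simp only [replaceAt, Option.map_eq_some_iff] at hrep
        obtain ⟨r', hr', rfl⟩ := hrep
        obtain ⟨h1, h2, h3⟩ := ih δ r r' (by simpa using h)
          ⟨t₀, t₁, rest, hlen, hs, hr'⟩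
        refine ⟨forall_append d k (forall_refl d k _) h1, ?_, ?_⟩
        · simp only [meas]; omega
        · simp only [BTree.numLeaves]; omega

theorem good_of_no_step (d k : ℕ) (t : BTree) : ∀ δ,
    (∀ (p : List Dir) (t' : BTree), d - 1 ≤ δ + p.count Dir.L → ¬ IsRightKRot k p t' t) →
    Good d k δ t := by
  induction t with
  | leaf => intro δ _; trivial
  | node l r ihl ihr =>
    intro δ h
    refine ⟨ihl _ ?_, ihr _ ?_, ?_⟩
    · rintro p t' hp ⟨t₀, t₁, rest, hlen, hs, hrep⟩
      refine h (Dir.L :: p) (BTree.node t' r) (by simp; omega) ⟨t₀, t₁, rest, hlen, ?_, ?_⟩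
      · simpa [subtreeAt] using hs
      · simp [replaceAt, hrep]
    · rintro p t' hp ⟨t₀, t₁, rest, hlen, hs, hrep⟩
      refine h (Dir.R :: p) (BTree.node l t') (by simpa using hp) ⟨t₀, t₁, rest, hlen, ?_, ?_⟩
      · simpa [subtreeAt] using hs
      · simp [replaceAt, hrep]
    · intro hδ
      by_contra hlt
      obtain ⟨t₁, rest, hlen, hr⟩ := spine_decomp k r (by omega)
      refine h [] (leftAssoc l (t₁ :: rest)) (by simpa using hδ) ⟨l, t₁, rest, hlen, ?_, ?_⟩
      · simp [subtreeAt]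
      · simp [replaceAt, hr]

theorem rel_iff (d k : ℕ) (s t : BTree) :
    DkRel d k s t ↔ List.Forall₂ (R d k) (ldAt 0 s) (ldAt 0 t) := by
  unfold DkRel ModListEq DepthEq
  rw [ld_eq, ld_eq]
  constructor
  · rintro ⟨h1, h2⟩
    generalize ldAt 0 s = a at *
    generalize ldAt 0 t = b at *
    induction h1 with
    | nil => exact .nil
    | cons h _ ih =>
      cases h2 with
      | cons h3 h4 => exact .cons ⟨h, h3⟩ (ih h4)
  · intro h
    exact ⟨h.imp fun _ _ h => h.1, h.imp fun _ _ h => h.2⟩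

theorem minimal_good (d k : ℕ) (hd : 1 ≤ d) (hk : 1 ≤ k) (t : BTree) (h : dkMinimal d k t) :
    Good d k 0 t := by
  apply good_of_no_step
  intro p t' hp hr
  have h1 : t' = t := h t' (Relation.ReflTransGen.single ⟨p, by simpa using hp, hr⟩)
  have h2 := (step_lemma d k hd hk p 0 t' t hp hr).2.1
  rw [h1] at h2
  omega

theorem exists_minimal (d k : ℕ) (hd : 1 ≤ d) (hk : 1 ≤ k) : ∀ (m : ℕ) (t : BTree), meas t = m →
    ∃ s : BTree, s.numLeaves = t.numLeaves ∧ List.Forall₂ (R d k) (ldAt 0 s) (ldAt 0 t) ∧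
      dkMinimal d k s := by
  intro m
  induction m using Nat.strong_induction_on with
  | _ m ih =>
    intro t hm
    by_cases ht : dkMinimal d k t
    · exact ⟨t, rfl, forall_refl d k _, ht⟩
    · unfold dkMinimal at ht
      push Not at ht
      obtain ⟨s, hs, hne⟩ := ht
      rcases Relation.ReflTransGen.cases_head hs with h | ⟨t', ⟨p, hp, hr⟩, _⟩
      · exact absurd h.symm hne
      · obtain ⟨h1, h2, h3⟩ := step_lemma d k hd hk p 0 t' t (by simpa using hp) hr
        obtain ⟨s', a, b, c⟩ := ih (meas t') (by omega) t' rfl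
        exact ⟨s', a.trans h3, forall_trans d k b h1, c⟩

theorem minimal_unique (d k : ℕ) (hd : 1 ≤ d) (hk : 1 ≤ k) (s s' : BTree)
    (h : dkMinimal d k s) (h' : dkMinimal d k s')
    (hr : List.Forall₂ (R d k) (ldAt 0 s) (ldAt 0 s')) : s = s' := by
  have heq := back_unique d k _ _ hr (good_chain d k s 0 (minimal_good d k hd hk s h))
    (good_chain d k s' 0 (minimal_good d k hd hk s' h')) (by
      obtain ⟨w, hw⟩ := ldAt_last s 0
      obtain ⟨w', hw'⟩ := ldAt_last s' 0
      simp [hw, hw'])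
  exact (ldAt_inj s 0 s' [] [] (by simpa using heq)).1

end Aux11

/-- for `d,k ≥ 1` and `n ≥ 0`, every equivalence class of the relation
`t ~ t'` iff `ld(t) ~_k^d ld(t')` on `T_n` contains exactly one `(d;k)`-minimal element. -/
theorem stmt11 (d k n : ℕ) (hd : 1 ≤ d) (hk : 1 ≤ k) (t : BTree)
    (ht : t.numLeaves = n + 1) :
    ∃! s : BTree, s.numLeaves = n + 1 ∧ DkRel d k s t ∧ dkMinimal d k s := by
  obtain ⟨s, h1, h2, h3⟩ := Aux11.exists_minimal d k hd hk _ t rfl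
  refine ⟨s, ⟨h1.trans ht, (Aux11.rel_iff d k s t).2 h2, h3⟩, ?_⟩
  rintro s' ⟨_, h5, h6⟩
  exact Aux11.minimal_unique d k hd hk s' s h6 h3
    (Aux11.forall_trans d k ((Aux11.rel_iff d k s' t).1 h5) (Aux11.forall_symm d k h2))
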